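/- arXiv:1710.06735 — 2 statements merged into one kernel-verified Lean document; each statement's English description precedes it below -/
import Mathlib

section
/- For any m×m Hermitian complex matrix Q, the Toeplitzification operator is a contraction in spectral norm: ‖𝒯(Q)‖ ≤ ‖Q‖. -/
open MeasureTheory ProbabilityTheory Filter Matrix Real
open scoped ComplexOrder

noncomputable section

/-- Spectral norm (largest singular value) of a complex matrix. -/
def opNorm {a b : ℕ} (A : Matrix (Fin a) (Fin b) ℂ) : ℝ :=
  ‖LinearMap.toContinuousLinearMap (Matrix.toEuclideanLin A)‖

/-- Fourier vector `d_m(λ) = m^{-1/2} (1, e^{-iλ}, …, e^{-i(m-1)λ})ᵀ`. -/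
def dm (m : ℕ) (l : ℝ) : Fin m → ℂ :=
  fun j => (Real.sqrt m : ℂ)⁻¹ * Complex.exp (-(Complex.I) * ((j : ℕ) : ℂ) * (l : ℂ))

/-- Sum of the entries of the `k`-th superdiagonal of `A`, divided by `m`. -/
def supDiagAvg {m : ℕ} (A : Matrix (Fin m) (Fin m) ℂ) (k : ℕ) : ℂ :=
  (m : ℂ)⁻¹ * ∑ l : Fin m, if h : (l : ℕ) + k < m then A l ⟨(l : ℕ) + k, h⟩ else 0

/-- Sum of the entries of the `k`-th subdiagonal of `A`, divided by `m`. -/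
def subDiagAvg {m : ℕ} (A : Matrix (Fin m) (Fin m) ℂ) (k : ℕ) : ℂ :=
  (m : ℂ)⁻¹ * ∑ l : Fin m, if h : (l : ℕ) + k < m then A ⟨(l : ℕ) + k, h⟩ l else 0

/-- Averaged `k`-th diagonal of `A`, for `k : ℤ`. -/
def diagAvg {m : ℕ} (A : Matrix (Fin m) (Fin m) ℂ) (k : ℤ) : ℂ :=
  if 0 ≤ k then supDiagAvg A k.toNat else subDiagAvg A (-k).toNat

/-- The Toeplitzification operator `𝒯`. -/
def toep {m : ℕ} (A : Matrix (Fin m) (Fin m) ℂ) : Matrix (Fin m) (Fin m) ℂ :=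
  Matrix.of fun i j =>
    if (i : ℕ) ≤ (j : ℕ) then supDiagAvg A ((j : ℕ) - (i : ℕ))
    else star (supDiagAvg A ((i : ℕ) - (j : ℕ)))

/-- The standard complex Gaussian distribution (independent real and imaginary
parts, each `N(0, 1/2)`, so that the variance `E|x|²` equals `1`). -/
def stdComplexGaussian : Measure ℂ :=
  Measure.map (Complex.measurableEquivRealProd.symm)
    ((gaussianReal 0 (1/2)).prod (gaussianReal 0 (1/2)))

/-- Outer product `z z^H` of a vector with itself. -/
def vecOuter {m : ℕ} (z : Fin m → ℂ) : Matrix (Fin m) (Fin m) ℂ :=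
  Matrix.of fun a b => z a * star (z b)

instance matrixMeasurableSpace {m n : ℕ} : MeasurableSpace (Matrix (Fin m) (Fin n) ℂ) :=
  (inferInstance : MeasurableSpace (Fin m → Fin n → ℂ))

/-- `i`-th column of a matrix, as a vector. -/
def colv {m N : ℕ} (A : Matrix (Fin m) (Fin N) ℂ) (i : Fin N) : Fin m → ℂ := fun a => A a i

/-- Maronna fixed-point equation for the scatter-matrix estimator built on the
sample vectors `z 0, …, z (N-1)`. -/
def isFP {m N : ℕ} (u : ℝ → ℝ) (z : Fin N → Fin m → ℂ)
    (S : Matrix (Fin m) (Fin m) ℂ) : Prop :=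
  S = (N : ℂ)⁻¹ • ∑ i : Fin N,
        u ((m : ℝ)⁻¹ * (star (z i) ⬝ᵥ (S⁻¹ *ᵥ z i)).re) • vecOuter (z i)

/-- Truncated spectral density `γ_m(λ) = ∑_{|k| ≤ m-1} c_k e^{ikλ}`. -/
def symbolTrunc (cf : ℤ → ℂ) (m : ℕ) (l : ℝ) : ℂ :=
  ∑ k ∈ Finset.Icc (1 - (m : ℤ)) ((m : ℤ) - 1),
    cf k * Complex.exp (Complex.I * (k : ℂ) * (l : ℂ))

/-- `‖γ‖_∞ = sup_{λ ∈ [0,2π)} |∑_{k ∈ ℤ} c_k e^{ikλ}|`. -/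
def supSymbol (cf : ℤ → ℂ) : ℝ :=
  ⨆ l ∈ Set.Ico (0 : ℝ) (2 * π),
    ‖∑' k : ℤ, cf k * Complex.exp (Complex.I * (k : ℂ) * (l : ℂ))‖

/-- Grid point `λ_i = 2πi/⌊N^β⌋`. -/
def gridPt (N : ℕ) (β : ℝ) (i : ℕ) : ℝ :=
  2 * π * (i : ℝ) / (Nat.floor ((N : ℝ) ^ β) : ℝ)

/-!
The `k`-th diagonal of `S_sᴴ A S_s`, with `S_s` the truncated shift by `s`, is a window of the
`k`-th diagonal of `A` slid by `s`. As `s` ranges over all shifts, every entry of `A` passes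
through every position of its diagonal exactly once, so `∑ₛ S_sᴴ A S_s = m • T A` with `T A` the
Toeplitz matrix of diagonal averages; for `A = 1` this says `∑ₛ S_sᴴ S_s = m • 1`. Stacking the
`S_s` into one block column `V` turns the sum into `Vᴴ (A ⊕ ⋯ ⊕ A) V`, whose norm is at most
`‖V‖² ‖A‖ = m ‖A‖`.
-/

section L2Operator

open scoped Matrix.Norms.L2Operator

variable {ι n p : Type*} [Fintype ι] [Fintype n] [DecidableEq n]

theorem l2_opNorm_blockDiagonal_const_le [DecidableEq ι] (A : Matrix n n ℂ) :
    ‖blockDiagonal fun _ : ι => A‖ ≤ ‖A‖ :=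
  let φ : Matrix n n ℂ →⋆ₙₐ[ℂ] Matrix (n × ι) (n × ι) ℂ :=
    { toFun := fun B => blockDiagonal fun _ => B
      map_smul' := fun c B => blockDiagonal_smul c fun _ => B
      map_zero' := blockDiagonal_zero
      map_add' := fun B C => blockDiagonal_add (fun _ => B) fun _ => C
      map_mul' := fun B C => blockDiagonal_mul (fun _ => B) fun _ => C
      map_star' := fun B => (blockDiagonal_conjTranspose fun _ => B).symm }
  NonUnitalStarAlgHom.norm_apply_le φ A

theorem l2_opNorm_sum_conjTranspose_mul_mul_le [Fintype p] [DecidableEq p]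
    (K : ι → Matrix n p ℂ) (A : Matrix n n ℂ) :
    ‖∑ s, (K s)ᴴ * A * K s‖ ≤ ‖A‖ * ‖∑ s, (K s)ᴴ * K s‖ := by
  classical
  let V : Matrix (n × ι) p ℂ := of fun x j => K x.2 x.1 j
  have compression (B : Matrix n n ℂ) :
      ∑ s, (K s)ᴴ * B * K s = Vᴴ * blockDiagonal (fun _ : ι => B) * V := by
    ext i j
    simp [V, Matrix.sum_apply, mul_apply, blockDiagonal_apply, Fintype.sum_prod_type_right]
  have gram : ∑ s, (K s)ᴴ * K s = Vᴴ * V := by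
    simpa only [Matrix.mul_one, ← Pi.one_def, blockDiagonal_one] using compression 1
  calc ‖∑ s, (K s)ᴴ * A * K s‖
      ≤ ‖Vᴴ‖ * ‖blockDiagonal fun _ : ι => A‖ * ‖V‖ := by
        rw [compression]
        exact (l2_opNorm_mul _ _).trans (by gcongr; exact l2_opNorm_mul _ _)
    _ ≤ ‖V‖ * ‖A‖ * ‖V‖ := by
        rw [l2_opNorm_conjTranspose]
        gcongr
        exact l2_opNorm_blockDiagonal_const_le A
    _ = ‖A‖ * ‖∑ s, (K s)ᴴ * K s‖ := by
        rw [gram, l2_opNorm_conjTranspose_mul_self]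
        ring

end L2Operator

section ToeplitzAverage

variable {m : ℕ}

theorem supDiagAvg_eq_sum (A : Matrix (Fin m) (Fin m) ℂ) (k : ℕ) :
    supDiagAvg A k =
      (m : ℂ)⁻¹ * ∑ a : Fin m, ∑ b : Fin m, if (b : ℕ) = a + k then A a b else 0 := by
  unfold supDiagAvg
  congr! 2 with a
  split_ifs with h
  · simp [← Fin.ext_iff (b := ⟨a + k, h⟩)]
  · exact (Finset.sum_eq_zero fun b _ => if_neg (by omega)).symm

theorem subDiagAvg_eq_supDiagAvg_transpose (A : Matrix (Fin m) (Fin m) ℂ) (k : ℕ) :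
    subDiagAvg A k = supDiagAvg Aᵀ k :=
  rfl

theorem diagAvg_eq_sum (A : Matrix (Fin m) (Fin m) ℂ) (k : ℤ) :
    diagAvg A k =
      (m : ℂ)⁻¹ * ∑ a : Fin m, ∑ b : Fin m, if (b : ℤ) - a = k then A a b else 0 := by
  unfold diagAvg
  split_ifs with hk
  · rw [supDiagAvg_eq_sum]
    congr! 5
    omega
  · rw [subDiagAvg_eq_supDiagAvg_transpose, supDiagAvg_eq_sum, Finset.sum_comm]
    simp only [transpose_apply]
    congr! 5
    omega

theorem star_supDiagAvg (A : Matrix (Fin m) (Fin m) ℂ) (k : ℕ) :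
    star (supDiagAvg A k) = subDiagAvg Aᴴ k := by
  simp [supDiagAvg, subDiagAvg, apply_dite]

/-- The Toeplitz matrix of the diagonal averages of `A`: the linear counterpart of `toep`, which
reads only the upper triangle of `A` and reflects it. -/
def toeplitzAvg (A : Matrix (Fin m) (Fin m) ℂ) : Matrix (Fin m) (Fin m) ℂ :=
  of fun i j => diagAvg A ((j : ℤ) - i)

theorem toep_eq_toeplitzAvg {Q : Matrix (Fin m) (Fin m) ℂ} (hQ : Q.IsHermitian) :
    toep Q = toeplitzAvg Q := by
  ext i j
  simp only [toep, toeplitzAvg, diagAvg, of_apply, star_supDiagAvg, hQ.eq, sub_nonneg,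
    Nat.cast_le]
  congr! 2 <;> omega

theorem toeplitzAvg_one : toeplitzAvg (1 : Matrix (Fin m) (Fin m) ℂ) = 1 := by
  ext i j
  have hm : (m : ℂ) ≠ 0 := Nat.cast_ne_zero.2 i.pos.ne'
  have on_diagonal (a b : Fin m) : (b : ℤ) - a = j - i ∧ a = b ↔ a = b ∧ i = j := by omega
  simp only [toeplitzAvg, diagAvg_eq_sum, of_apply, one_apply, ← ite_and, on_diagonal]
  simp [ite_and, hm]

/-- The `m × m` matrix of the truncated shift `e_i ↦ e_{i+s}`, where `e_{i+s} = 0` if `i + s` is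
out of range. -/
def truncShift (m : ℕ) (s : ℤ) : Matrix (Fin m) (Fin m) ℂ :=
  of fun a i => if (a : ℤ) = i + s then 1 else 0

theorem conjTranspose_truncShift_mul_mul_apply (A : Matrix (Fin m) (Fin m) ℂ) (s : ℤ)
    (i j : Fin m) :
    ((truncShift m s)ᴴ * A * truncShift m s) i j =
      ∑ a : Fin m, ∑ b : Fin m, if (a : ℤ) = i + s ∧ (b : ℤ) = j + s then A a b else 0 := by
  rw [Finset.sum_comm]
  simp only [truncShift, mul_apply, conjTranspose_apply, of_apply, apply_ite star, star_one,
    star_zero, ite_mul, one_mul, zero_mul, mul_ite, mul_one, mul_zero]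
  congr! 1 with b
  split_ifs with hb <;> simp [hb]

theorem sum_conjTranspose_truncShift_mul_mul (A : Matrix (Fin m) (Fin m) ℂ) :
    ∑ s : Finset.Ioo (-(m : ℤ)) m, (truncShift m s)ᴴ * A * truncShift m s =
      (m : ℂ) • toeplitzAvg A := by
  ext i j
  have hm : (m : ℂ) ≠ 0 := Nat.cast_ne_zero.2 i.pos.ne'
  have unique_shift (a b : Fin m) (s : ℤ) :
      (a : ℤ) = i + s ∧ (b : ℤ) = j + s ↔ (a : ℤ) - i = s ∧ (b : ℤ) - a = j - i := by omega
  have shift_mem (a : Fin m) : (a : ℤ) - i ∈ Finset.Ioo (-(m : ℤ)) m := by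
    rw [Finset.mem_Ioo]
    omega
  calc (∑ s : Finset.Ioo (-(m : ℤ)) m, (truncShift m s)ᴴ * A * truncShift m s) i j
      = ∑ s ∈ Finset.Ioo (-(m : ℤ)) m, ∑ a : Fin m, ∑ b : Fin m,
          if (a : ℤ) = i + s ∧ (b : ℤ) = j + s then A a b else 0 := by
        simp only [Matrix.sum_apply, conjTranspose_truncShift_mul_mul_apply]
        exact Finset.sum_coe_sort _ fun s : ℤ => ∑ a : Fin m, ∑ b : Fin m,
          if (a : ℤ) = i + s ∧ (b : ℤ) = j + s then A a b else 0
    _ = ∑ a : Fin m, ∑ b : Fin m, ∑ s ∈ Finset.Ioo (-(m : ℤ)) m,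
          if (a : ℤ) = i + s ∧ (b : ℤ) = j + s then A a b else 0 := by
        rw [Finset.sum_comm]
        exact Finset.sum_congr rfl fun a _ => Finset.sum_comm
    _ = ∑ a : Fin m, ∑ b : Fin m, if (b : ℤ) - a = j - i then A a b else 0 := by
        simp only [unique_shift, ite_and, Finset.sum_ite_eq, shift_mem, if_true]
    _ = ((m : ℂ) • toeplitzAvg A) i j := by
        simp [toeplitzAvg, diagAvg_eq_sum, hm]

open scoped Matrix.Norms.L2Operator

theorem opNorm_eq_l2_opNorm {a b : ℕ} (A : Matrix (Fin a) (Fin b) ℂ) : opNorm A = ‖A‖ :=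
  rfl

theorem l2_opNorm_toeplitzAvg_le (A : Matrix (Fin m) (Fin m) ℂ) : ‖toeplitzAvg A‖ ≤ ‖A‖ := by
  rcases m.eq_zero_or_pos with rfl | hm
  · exact (congrArg norm (Subsingleton.elim _ _)).le
  have : NeZero m := ⟨hm.ne'⟩
  have gram : ∑ s : Finset.Ioo (-(m : ℤ)) m, (truncShift m s)ᴴ * truncShift m s = (m : ℂ) • 1 := by
    simpa only [Matrix.mul_one, toeplitzAvg_one] using
      sum_conjTranspose_truncShift_mul_mul (1 : Matrix (Fin m) (Fin m) ℂ)
  have scaled : m * ‖toeplitzAvg A‖ ≤ m * ‖A‖ :=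
    calc m * ‖toeplitzAvg A‖
        = ‖(m : ℂ) • toeplitzAvg A‖ := by simp [norm_smul]
      _ ≤ ‖A‖ * ‖(m : ℂ) • (1 : Matrix (Fin m) (Fin m) ℂ)‖ := by
          rw [← sum_conjTranspose_truncShift_mul_mul, ← gram]
          exact l2_opNorm_sum_conjTranspose_mul_mul_le _ A
      _ = m * ‖A‖ := by simp [norm_smul, mul_comm]
  exact le_of_mul_le_mul_left scaled (mod_cast hm)

end ToeplitzAverage

/-- The Toeplitzification operator is a contraction in
spectral norm on Hermitian matrices: `‖𝒯(Q)‖ ≤ ‖Q‖`. -/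
theorem stmt12 {m : ℕ} (Q : Matrix (Fin m) (Fin m) ℂ) (hQ : Q.IsHermitian) :
    opNorm (toep Q) ≤ opNorm Q := by
  rw [toep_eq_toeplitzAvg hQ, opNorm_eq_l2_opNorm, opNorm_eq_l2_opNorm]
  exact l2_opNorm_toeplitzAvg_le Q

end
end

section
/- Under the model assumptions (columns of M absolutely summable with p fixed, entries of Γ absolutely summable, X and δ with i.i.d. standard complex Gaussian entries, τ_i i.i.d. positive with finite mean and (1/N)∑τ_i → 1 almost surely, (c_k) absolutely summable, m/N → c > 0), the cross term γ̂_m^{cross}(λ) = 2·Re[ d_m(λ)^H·((1/N)·C^{1/2} X T^{1/2} Γ^{1/2} δ M^H)·d_m(λ) ] satisfies sup_{λ∈[0,2π)} | γ̂_m^{cross}(λ) | → 0 almost surely as N → ∞. -/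
open MeasureTheory ProbabilityTheory Filter Matrix Real
open scoped ComplexOrder

noncomputable section

/-- The positive semidefinite square root of a positive semidefinite matrix
(Mathlib's former `Matrix.PosSemidef.sqrt`). -/
def Matrix.PosSemidef.sqrt {n 𝕜 : Type*} [Fintype n] [RCLike 𝕜] [DecidableEq n]
    {A : Matrix n n 𝕜} (hA : A.PosSemidef) : Matrix n n 𝕜 :=
  hA.1.eigenvectorUnitary.1 * Matrix.diagonal ((↑) ∘ Real.sqrt ∘ hA.1.eigenvalues) *
    (star hA.1.eigenvectorUnitary : Matrix n n 𝕜)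

/-! Each column of `C^{1/2} X T^{1/2} Γ^{1/2} δ` is `C^{1/2} X v`, where
`v = T^{1/2} Γ^{1/2} δ_s` is independent of `X`, so its expected squared norm factorizes; it is at
most `tr C · max 𝔼τ_i · tr Γ = O(m)`. Hence `(N √m)⁻¹` times the norm of the column has second
moment `O(N⁻²)` and tends to zero almost surely by summability. This controls the supremum over
`λ` deterministically: `|d_m(λ)ᴴ w| ≤ ‖w‖` by Cauchy–Schwarz, while the entries of `d_m(λ)` have
modulus `m^{-1/2}`, so its products with the columns of `M` are at most `m^{-1/2}` times their
`ℓ¹` norms. -/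

theorem enorm_sq_eq_ofReal_norm_sq {E : Type*} [SeminormedAddCommGroup E] (x : E) :
    ‖x‖ₑ ^ 2 = ENNReal.ofReal (‖x‖ ^ 2) := by
  rw [ENNReal.ofReal_pow (norm_nonneg x), ofReal_norm]

section PosSemidefSqrt

variable {n 𝕜 : Type*} [Fintype n] [RCLike 𝕜]

theorem sum_sum_enorm_sq_eq_ofReal_re_trace {m : Type*} [Fintype m] (A : Matrix m n 𝕜) :
    ∑ i, ∑ j, ‖A i j‖ₑ ^ 2 = ENNReal.ofReal (RCLike.re (A * Aᴴ).trace) := by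
  have re_diag (i : m) : RCLike.re ((A * Aᴴ) i i) = ∑ j, ‖A i j‖ ^ 2 := by
    rw [Matrix.mul_apply, map_sum]
    refine Finset.sum_congr rfl fun j _ => ?_
    rw [conjTranspose_apply, RCLike.star_def, RCLike.mul_conj, ← RCLike.ofReal_pow,
      RCLike.ofReal_re]
  simp only [Matrix.trace, Matrix.diag_apply, map_sum, re_diag, enorm_sq_eq_ofReal_norm_sq]
  rw [ENNReal.ofReal_sum_of_nonneg fun _ _ => by positivity]
  simp only [ENNReal.ofReal_sum_of_nonneg fun _ _ => sq_nonneg _]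

variable [DecidableEq n] {A : Matrix n n 𝕜}

theorem posSemidef_sqrt_mul_conjTranspose_self (hA : A.PosSemidef) :
    hA.sqrt * hA.sqrtᴴ = A := by
  set U : Matrix n n 𝕜 := hA.1.eigenvectorUnitary.1
  set D : Matrix n n 𝕜 := diagonal ((↑) ∘ Real.sqrt ∘ hA.1.eigenvalues)
  have U_unitary : star U * U = 1 := Unitary.coe_star_mul_self hA.1.eigenvectorUnitary
  have D_sq : D * Dᴴ = diagonal (RCLike.ofReal ∘ hA.1.eigenvalues) := by
    rw [diagonal_conjTranspose, diagonal_mul_diagonal]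
    congr 1
    ext i
    simp only [Function.comp_apply, Pi.star_apply, RCLike.star_def, RCLike.conj_ofReal]
    rw [← RCLike.ofReal_mul, Real.mul_self_sqrt (hA.eigenvalues_nonneg i)]
  calc hA.sqrt * hA.sqrtᴴ
      = U * D * star U * (U * D * star U)ᴴ := rfl
    _ = U * D * (star U * U) * Dᴴ * star U := by
        simp only [conjTranspose_mul, star_eq_conjTranspose, conjTranspose_conjTranspose,
          Matrix.mul_assoc]
    _ = U * diagonal (RCLike.ofReal ∘ hA.1.eigenvalues) * star U := by
        rw [U_unitary, Matrix.mul_one, Matrix.mul_assoc U, D_sq]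
    _ = A := by
        conv_rhs => rw [hA.1.spectral_theorem, Unitary.conjStarAlgAut_apply]

theorem sum_sum_enorm_sq_posSemidef_sqrt (hA : A.PosSemidef) :
    ∑ i, ∑ j, ‖hA.sqrt i j‖ₑ ^ 2 = ENNReal.ofReal (RCLike.re A.trace) := by
  rw [sum_sum_enorm_sq_eq_ofReal_re_trace, posSemidef_sqrt_mul_conjTranspose_self]

end PosSemidefSqrt

section Independence

variable {Ω α β γ : Type*} [MeasurableSpace Ω] [MeasurableSpace α] [MeasurableSpace β]
  [MeasurableSpace γ] {P : Measure Ω}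

theorem lintegral_prodMk_of_indepFun [IsFiniteMeasure P] {X : Ω → α} {Y : Ω → β}
    (hX : AEMeasurable X P) (hY : AEMeasurable Y P) (hXY : IndepFun X Y P)
    {F : α × β → ENNReal} (hF : Measurable F) :
    ∫⁻ ω, F (X ω, Y ω) ∂P = ∫⁻ ω', ∫⁻ ω, F (X ω, Y ω') ∂P ∂P := by
  calc ∫⁻ ω, F (X ω, Y ω) ∂P
      = ∫⁻ q, F q ∂((P.map X).prod (P.map Y)) := by
        rw [← (indepFun_iff_map_prod_eq_prod_map_map hX hY).1 hXY,
          lintegral_map' hF.aemeasurable (hX.prodMk hY)]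
    _ = ∫⁻ y, ∫⁻ x, F (x, y) ∂(P.map X) ∂(P.map Y) := lintegral_prod_symm _ hF.aemeasurable
    _ = ∫⁻ ω', ∫⁻ x, F (x, Y ω') ∂(P.map X) ∂P :=
        lintegral_map' hF.lintegral_prod_left'.aemeasurable hY
    _ = ∫⁻ ω', ∫⁻ ω, F (X ω, Y ω') ∂P ∂P :=
        lintegral_congr fun ω' => lintegral_map' (by fun_prop) hX

theorem indepFun_prodMk_right_of_indepFun_prodMk_left [IsProbabilityMeasure P] {X : Ω → α}
    {Y : Ω → β} {Z : Ω → γ} (hX : AEMeasurable X P) (hY : AEMeasurable Y P)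
    (hZ : AEMeasurable Z P) (hXY : IndepFun X Y P) (hXYZ : IndepFun (fun ω => (X ω, Y ω)) Z P) :
    IndepFun X (fun ω => (Y ω, Z ω)) P := by
  have map_XY := (indepFun_iff_map_prod_eq_prod_map_map hX hY).1 hXY
  have map_XYZ := (indepFun_iff_map_prod_eq_prod_map_map (hX.prodMk hY) hZ).1 hXYZ
  have hYZ : IndepFun Y Z P := hXYZ.comp measurable_snd measurable_id
  rw [indepFun_iff_map_prod_eq_prod_map_map hX (hY.prodMk hZ),
    (indepFun_iff_map_prod_eq_prod_map_map hY hZ).1 hYZ, ← Measure.prodAssoc_prod, ← map_XY,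
    ← map_XYZ, AEMeasurable.map_map_of_aemeasurable (by fun_prop) ((hX.prodMk hY).prodMk hZ)]
  rfl

end Independence

/-- A family of scalar random variables which is orthonormal in `L²(P)`; this is all that the
second-moment computations retain of the i.i.d. standard complex Gaussian entries. -/
structure L2Orthonormal {Ω ι 𝕜 : Type*} [MeasurableSpace Ω] [RCLike 𝕜] (z : ι → Ω → 𝕜)
    (P : Measure Ω) : Prop where
  memLp : ∀ i, MemLp (z i) 2 P
  integral_norm_sq : ∀ i, ∫ ω, ‖z i ω‖ ^ 2 ∂P = 1
  integral_mul_star : Pairwise fun i j => ∫ ω, z i ω * star (z j ω) ∂P = 0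

namespace L2Orthonormal

variable {Ω ι 𝕜 : Type*} [MeasurableSpace Ω] [RCLike 𝕜] {z : ι → Ω → 𝕜} {P : Measure Ω}

theorem of_pairwise_indepFun (hmem : ∀ i, MemLp (z i) 2 P) (hmean : ∀ i, ∫ ω, z i ω ∂P = 0)
    (hsq : ∀ i, ∫ ω, ‖z i ω‖ ^ 2 ∂P = 1) (hindep : Pairwise fun i j => IndepFun (z i) (z j) P) :
    L2Orthonormal z P where
  memLp := hmem
  integral_norm_sq := hsq
  integral_mul_star i j hij := by
    have hstar : IndepFun (z i) (fun ω => star (z j ω)) P :=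
      (hindep hij).comp measurable_id continuous_star.measurable
    change ∫ ω, z i ω * star (z j ω) ∂P = 0
    rw [hstar.integral_fun_mul_eq_mul_integral (hmem i).1 (hmem j).1.star, hmean i, zero_mul]

theorem aemeasurable (hz : L2Orthonormal z P) (i : ι) : AEMeasurable (z i) P :=
  (hz.memLp i).1.aemeasurable

variable [Fintype ι]

theorem integral_norm_sum_mul_sq (hz : L2Orthonormal z P) (a : ι → 𝕜) :
    ∫ ω, ‖∑ i, a i * z i ω‖ ^ 2 ∂P = ∑ i, ‖a i‖ ^ 2 := by
  classical
  have int_mul_star (i j : ι) : Integrable (fun ω => z i ω * star (z j ω)) P :=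
    (hz.memLp i).integrable_mul (hz.memLp j).star
  have gram (i j : ι) : ∫ ω, z i ω * star (z j ω) ∂P = if i = j then 1 else 0 := by
    split_ifs with hij
    · subst hij
      simp only [RCLike.star_def, RCLike.mul_conj, ← RCLike.ofReal_pow]
      rw [integral_ofReal, hz.integral_norm_sq, RCLike.ofReal_one]
    · exact hz.integral_mul_star hij
  apply RCLike.ofReal_injective (K := 𝕜)
  calc ((∫ ω, ‖∑ i, a i * z i ω‖ ^ 2 ∂P : ℝ) : 𝕜)
      = ∫ ω, (∑ i, a i * z i ω) * star (∑ j, a j * z j ω) ∂P := by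
        simp only [RCLike.star_def, RCLike.mul_conj, ← RCLike.ofReal_pow, integral_ofReal]
    _ = ∫ ω, ∑ i, ∑ j, a i * star (a j) * (z i ω * star (z j ω)) ∂P := by
        simp only [star_sum, star_mul', Finset.sum_mul_sum, mul_mul_mul_comm]
    _ = ∑ i, ∑ j, a i * star (a j) * ∫ ω, z i ω * star (z j ω) ∂P := by
        have int_term (i j : ι) := (int_mul_star i j).const_mul (a i * star (a j))
        rw [integral_finsetSum _ fun i _ => integrable_finsetSum _ fun j _ => int_term i j]
        refine Finset.sum_congr rfl fun i _ => ?_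
        rw [integral_finsetSum _ fun j _ => int_term i j]
        exact Finset.sum_congr rfl fun j _ => integral_const_mul _ _
    _ = ((∑ i, ‖a i‖ ^ 2 : ℝ) : 𝕜) := by
        simp only [gram, mul_ite, mul_one, mul_zero, Finset.sum_ite_eq, Finset.mem_univ, if_true]
        simp only [RCLike.star_def, RCLike.mul_conj, RCLike.ofReal_sum, RCLike.ofReal_pow]

theorem lintegral_enorm_sum_mul_sq (hz : L2Orthonormal z P) (a : ι → 𝕜) :
    ∫⁻ ω, ‖∑ i, a i * z i ω‖ₑ ^ 2 ∂P = ∑ i, ‖a i‖ₑ ^ 2 := by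
  have mem_sum : MemLp (fun ω => ∑ i, a i * z i ω) 2 P :=
    memLp_finsetSum _ fun i _ => (hz.memLp i).const_mul (a i)
  simp only [enorm_sq_eq_ofReal_norm_sq]
  rw [← ofReal_integral_eq_lintegral_ofReal mem_sum.norm.integrable_sq
      (ae_of_all _ fun _ => sq_nonneg _),
    hz.integral_norm_sum_mul_sq, ENNReal.ofReal_sum_of_nonneg fun _ _ => sq_nonneg _]

theorem lintegral_enorm_sum_mul_sq_of_indepFun [IsFiniteMeasure P] (hz : L2Orthonormal z P)
    {a : Ω → ι → 𝕜} (ha : AEMeasurable a P) (hza : IndepFun (fun ω i => z i ω) a P) :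
    ∫⁻ ω, ‖∑ i, a ω i * z i ω‖ₑ ^ 2 ∂P = ∑ i, ∫⁻ ω, ‖a ω i‖ₑ ^ 2 ∂P := by
  have z_meas : AEMeasurable (fun ω i => z i ω) P := aemeasurable_pi_lambda _ hz.aemeasurable
  have F_meas : Measurable fun q : (ι → 𝕜) × (ι → 𝕜) => ‖∑ i, q.2 i * q.1 i‖ₑ ^ 2 := by
    fun_prop
  rw [lintegral_prodMk_of_indepFun z_meas ha hza F_meas]
  simp only [hz.lintegral_enorm_sum_mul_sq]
  exact lintegral_finsetSum' _ fun i _ => by fun_prop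

end L2Orthonormal

section StdComplexGaussian

instance : IsGaussian stdComplexGaussian :=
  isGaussian_map_equiv Complex.equivRealProdCLM.symm

theorem memLp_id_stdComplexGaussian : MemLp id 2 stdComplexGaussian :=
  IsGaussian.memLp_id _ 2 (by norm_num)

theorem map_re_stdComplexGaussian : stdComplexGaussian.map Complex.re = gaussianReal 0 (1 / 2) := by
  have hcomp : Complex.re ∘ Complex.measurableEquivRealProd.symm = Prod.fst := rfl
  rw [stdComplexGaussian, Measure.map_map (by fun_prop) (by fun_prop), hcomp,
    Measure.map_fst_prod, measure_univ, one_smul]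

theorem map_im_stdComplexGaussian : stdComplexGaussian.map Complex.im = gaussianReal 0 (1 / 2) := by
  have hcomp : Complex.im ∘ Complex.measurableEquivRealProd.symm = Prod.snd := rfl
  rw [stdComplexGaussian, Measure.map_map (by fun_prop) (by fun_prop), hcomp,
    Measure.map_snd_prod, measure_univ, one_smul]

theorem integral_id_stdComplexGaussian : ∫ z, z ∂stdComplexGaussian = 0 := by
  have hint : Integrable id stdComplexGaussian :=
    memLp_id_stdComplexGaussian.integrable (by norm_num)
  apply Complex.ext
  · calc (∫ z, z ∂stdComplexGaussian).re
      _ = ∫ z, z.re ∂stdComplexGaussian := (integral_re hint).symm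
      _ = ∫ x, x ∂(stdComplexGaussian.map Complex.re) :=
        (integral_map Complex.measurable_re.aemeasurable aestronglyMeasurable_id).symm
      _ = 0 := by rw [map_re_stdComplexGaussian, integral_id_gaussianReal]
  · calc (∫ z, z ∂stdComplexGaussian).im
      _ = ∫ z, z.im ∂stdComplexGaussian := (integral_im hint).symm
      _ = ∫ x, x ∂(stdComplexGaussian.map Complex.im) :=
        (integral_map Complex.measurable_im.aemeasurable aestronglyMeasurable_id).symm
      _ = 0 := by rw [map_im_stdComplexGaussian, integral_id_gaussianReal]

theorem integral_sq_gaussianReal_zero (v : NNReal) : ∫ x, x ^ 2 ∂gaussianReal 0 v = v := by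
  rw [← variance_id_gaussianReal (μ := 0) (v := v),
    variance_of_integral_eq_zero aemeasurable_id (by simp)]
  rfl

theorem integral_norm_sq_stdComplexGaussian : ∫ z, ‖z‖ ^ 2 ∂stdComplexGaussian = 1 := by
  have hre : ∫ z, z.re ^ 2 ∂stdComplexGaussian = 1 / 2 := by
    rw [← integral_map (f := fun x : ℝ => x ^ 2) (by fun_prop) (by fun_prop),
      map_re_stdComplexGaussian, integral_sq_gaussianReal_zero]
    norm_num
  have him : ∫ z, z.im ^ 2 ∂stdComplexGaussian = 1 / 2 := by
    rw [← integral_map (f := fun x : ℝ => x ^ 2) (by fun_prop) (by fun_prop),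
      map_im_stdComplexGaussian, integral_sq_gaussianReal_zero]
    norm_num
  calc ∫ z, ‖z‖ ^ 2 ∂stdComplexGaussian
      = ∫ z, (z.re ^ 2 + z.im ^ 2) ∂stdComplexGaussian := by
        simp only [Complex.sq_norm, Complex.normSq_apply, ← sq]
    _ = 1 / 2 + 1 / 2 := by
        have int_re : Integrable (fun z : ℂ => z.re ^ 2) stdComplexGaussian :=
          memLp_id_stdComplexGaussian.re.integrable_sq
        have int_im : Integrable (fun z : ℂ => z.im ^ 2) stdComplexGaussian :=
          memLp_id_stdComplexGaussian.im.integrable_sq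
        rw [integral_add int_re int_im, hre, him]
    _ = 1 := add_halves 1

variable {Ω ι : Type*} [MeasurableSpace Ω] {P : Measure Ω} {z : ι → Ω → ℂ}

theorem identDistrib_id_of_map_eq {E : Type*} [MeasurableSpace E] {f : Ω → E} {μ : Measure E}
    [NeZero μ] (hf : P.map f = μ) : IdentDistrib f id P μ where
  aemeasurable_fst := AEMeasurable.of_map_ne_zero (hf ▸ NeZero.ne μ)
  aemeasurable_snd := aemeasurable_id
  map_eq := hf.trans Measure.map_id.symm

theorem L2Orthonormal.of_iIndepFun_stdComplexGaussian (hindep : iIndepFun z P)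
    (hlaw : ∀ i, P.map (z i) = stdComplexGaussian) : L2Orthonormal z P := by
  have hident (i : ι) : IdentDistrib (z i) id P stdComplexGaussian :=
    identDistrib_id_of_map_eq (hlaw i)
  refine .of_pairwise_indepFun (fun i => ?_) (fun i => ?_) (fun i => ?_)
    fun i j hij => hindep.indepFun hij
  · exact (hident i).memLp_iff.2 memLp_id_stdComplexGaussian
  · exact (hident i).integral_eq.trans integral_id_stdComplexGaussian
  · exact ((hident i).comp (u := fun w => ‖w‖ ^ 2) (by fun_prop)).integral_eq.trans
      integral_norm_sq_stdComplexGaussian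

end StdComplexGaussian

theorem ae_tendsto_zero_of_tsum_lintegral_enorm_pow_ne_top {Ω E : Type*} [MeasurableSpace Ω]
    [NormedAddCommGroup E] {P : Measure Ω} {f : ℕ → Ω → E} {q : ℕ} (hq : q ≠ 0)
    (hf : ∀ n, AEStronglyMeasurable (f n) P) (hsum : ∑' n, ∫⁻ ω, ‖f n ω‖ₑ ^ q ∂P ≠ ⊤) :
    ∀ᵐ ω ∂P, Tendsto (fun n => f n ω) atTop (nhds 0) := by
  have pow_meas (n : ℕ) : AEMeasurable (fun ω => ‖f n ω‖ₑ ^ q) P := (hf n).enorm.pow_const q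
  rw [← lintegral_tsum pow_meas] at hsum
  filter_upwards [ae_lt_top' (.tsum pow_meas) hsum] with ω hω
  have pow_lim := ENNReal.tendsto_atTop_zero_of_tsum_ne_top hω.ne
  rw [tendsto_zero_iff_enorm_tendsto_zero]
  have q_inv_pos : 0 < (q : ℝ)⁻¹ := by positivity
  simpa [← ENNReal.rpow_natCast, hq, ENNReal.zero_rpow_of_pos q_inv_pos] using
    pow_lim.ennrpow_const (q : ℝ)⁻¹

section SecondMoment

variable {Ω ι α β γ 𝕜 : Type*} [MeasurableSpace Ω] {P : Measure Ω} [Fintype ι] [Fintype α]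
  [Fintype β] [Fintype γ] [RCLike 𝕜]

theorem lintegral_sum_enorm_sq_mulVec_mulVec [IsFiniteMeasure P] (S : Matrix ι α 𝕜)
    {X : Ω → Matrix α β 𝕜} {v : Ω → β → 𝕜}
    (hX : L2Orthonormal (fun (q : α × β) ω => X ω q.1 q.2) P)
    (hv : AEMeasurable v P) (hXv : IndepFun (fun ω (q : α × β) => X ω q.1 q.2) v P) :
    ∫⁻ ω, ∑ i, ‖(S *ᵥ X ω *ᵥ v ω) i‖ₑ ^ 2 ∂P =
      (∑ i, ∑ a, ‖S i a‖ₑ ^ 2) * ∑ b, ∫⁻ ω, ‖v ω b‖ₑ ^ 2 ∂P := by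
  have expand (ω : Ω) (i : ι) :
      (S *ᵥ X ω *ᵥ v ω) i = ∑ q : α × β, S i q.1 * v ω q.2 * X ω q.1 q.2 := by
    simp only [mulVec, dotProduct, Fintype.sum_prod_type, Finset.mul_sum]
    exact Finset.sum_congr rfl fun a _ => Finset.sum_congr rfl fun b _ => by ring
  have row (i : ι) : ∫⁻ ω, ‖∑ q : α × β, S i q.1 * v ω q.2 * X ω q.1 q.2‖ₑ ^ 2 ∂P =
      (∑ a, ‖S i a‖ₑ ^ 2) * ∑ b, ∫⁻ ω, ‖v ω b‖ₑ ^ 2 ∂P := by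
    have coeff_meas : Measurable fun (u : β → 𝕜) (q : α × β) => S i q.1 * u q.2 := by fun_prop
    rw [hX.lintegral_enorm_sum_mul_sq_of_indepFun (a := fun ω q => S i q.1 * v ω q.2)
      (coeff_meas.comp_aemeasurable hv) (hXv.comp measurable_id coeff_meas),
      Fintype.sum_prod_type, Finset.sum_mul_sum]
    refine Finset.sum_congr rfl fun a _ => Finset.sum_congr rfl fun b _ => ?_
    simp only [enorm_mul, mul_pow]
    exact lintegral_const_mul'' _ (by fun_prop)
  have term_meas (i : ι) :
      AEMeasurable (fun ω => ‖∑ q : α × β, S i q.1 * v ω q.2 * X ω q.1 q.2‖ₑ ^ 2) P := by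
    have X_meas := hX.aemeasurable
    fun_prop
  simp only [expand]
  rw [lintegral_finsetSum' _ fun i _ => term_meas i, Finset.sum_mul]
  exact Finset.sum_congr rfl fun i _ => row i

theorem lintegral_enorm_sq_mul_dotProduct [IsFiniteMeasure P] {t : Ω → 𝕜} (g : β → 𝕜)
    {y : Ω → β → 𝕜} (hy : L2Orthonormal (fun b ω => y ω b) P) (ht : AEMeasurable t P)
    (hyt : IndepFun y t P) :
    ∫⁻ ω, ‖t ω * (g ⬝ᵥ y ω)‖ₑ ^ 2 ∂P = (∫⁻ ω, ‖t ω‖ₑ ^ 2 ∂P) * ∑ b, ‖g b‖ₑ ^ 2 := by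
  have coeff_meas : Measurable fun (u : 𝕜) b => u * g b := by fun_prop
  have expand (ω : Ω) : t ω * (g ⬝ᵥ y ω) = ∑ b, t ω * g b * y ω b := by
    simp only [dotProduct, Finset.mul_sum, mul_assoc]
  simp only [expand]
  rw [hy.lintegral_enorm_sum_mul_sq_of_indepFun (a := fun ω b => t ω * g b)
    (coeff_meas.comp_aemeasurable ht) (hyt.comp measurable_id coeff_meas), Finset.mul_sum]
  refine Finset.sum_congr rfl fun b _ => ?_
  simp only [enorm_mul, mul_pow]
  exact lintegral_mul_const'' _ (by fun_prop)

theorem lintegral_sum_enorm_sq_mul_diagonal_mul_mulVec [IsProbabilityMeasure P] [DecidableEq β]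
    (S : Matrix ι α 𝕜) (G : Matrix β γ 𝕜) {X : Ω → Matrix α β 𝕜} {y : Ω → γ → 𝕜} {t : Ω → β → 𝕜}
    (hX : L2Orthonormal (fun (q : α × β) ω => X ω q.1 q.2) P)
    (hy : L2Orthonormal (fun c ω => y ω c) P) (ht : AEMeasurable t P)
    (hXy : IndepFun (fun ω (q : α × β) => X ω q.1 q.2) y P)
    (hXyt : IndepFun (fun ω => (fun q : α × β => X ω q.1 q.2, y ω)) t P) :
    ∫⁻ ω, ∑ i, ‖((S * X ω * diagonal (t ω) * G) *ᵥ y ω) i‖ₑ ^ 2 ∂P =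
      (∑ i, ∑ a, ‖S i a‖ₑ ^ 2) *
        ∑ b, (∫⁻ ω, ‖t ω b‖ₑ ^ 2 ∂P) * ∑ c, ‖G b c‖ₑ ^ 2 := by
  set v : Ω → β → 𝕜 := fun ω b => t ω b * (G b ⬝ᵥ y ω)
  have X_meas : AEMeasurable (fun ω (q : α × β) => X ω q.1 q.2) P :=
    aemeasurable_pi_lambda _ hX.aemeasurable
  have y_meas : AEMeasurable y P := aemeasurable_pi_lambda _ hy.aemeasurable
  have hyt (b : β) : IndepFun y (fun ω => t ω b) P :=
    hXyt.comp measurable_snd (measurable_pi_apply b)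
  have v_of_yt_meas : Measurable fun (q : (γ → 𝕜) × (β → 𝕜)) b => q.2 b * (G b ⬝ᵥ q.1) := by
    simp only [dotProduct]
    fun_prop
  have v_meas : AEMeasurable v P := v_of_yt_meas.comp_aemeasurable (y_meas.prodMk ht)
  have hXv : IndepFun (fun ω (q : α × β) => X ω q.1 q.2) v P :=
    (indepFun_prodMk_right_of_indepFun_prodMk_left X_meas y_meas ht hXy hXyt).comp
      measurable_id v_of_yt_meas
  have mulVec_eq (ω : Ω) : (S * X ω * diagonal (t ω) * G) *ᵥ y ω = S *ᵥ X ω *ᵥ v ω := by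
    have v_eq : v ω = diagonal (t ω) *ᵥ G *ᵥ y ω := by
      ext b
      rw [mulVec_diagonal]
      rfl
    rw [v_eq]
    simp only [mulVec_mulVec, Matrix.mul_assoc]
  simp only [mulVec_eq]
  rw [lintegral_sum_enorm_sq_mulVec_mulVec S hX v_meas hXv]
  congr 1
  exact Finset.sum_congr rfl fun b _ =>
    lintegral_enorm_sq_mul_dotProduct (G b) hy (by fun_prop) (hyt b)

theorem enorm_ofReal_sqrt_sq {x : ℝ} (hx : 0 ≤ x) : ‖(√x : 𝕜)‖ₑ ^ 2 = ENNReal.ofReal x := by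
  rw [enorm_sq_eq_ofReal_norm_sq, RCLike.norm_ofReal, sq_abs, sq_sqrt hx]

theorem lintegral_enorm_ofReal_sqrt_sq {f : Ω → ℝ} (hf : Integrable f P) (hf_nonneg : 0 ≤ᵐ[P] f) :
    ∫⁻ ω, ‖(√(f ω) : 𝕜)‖ₑ ^ 2 ∂P = ENNReal.ofReal (∫ ω, f ω ∂P) := by
  rw [ofReal_integral_eq_lintegral_ofReal hf hf_nonneg]
  exact lintegral_congr_ae (hf_nonneg.mono fun ω hω => enorm_ofReal_sqrt_sq hω)

theorem lintegral_sum_enorm_sq_sqrt_mul_diagonal_sqrt_mul_sqrt_mulVec_le [IsProbabilityMeasure P]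
    [DecidableEq α] [DecidableEq β] {C : Matrix α α 𝕜} {Γ : Matrix β β 𝕜} (hC : C.PosSemidef)
    (hΓ : Γ.PosSemidef) {X : Ω → Matrix α β 𝕜} {y : Ω → β → 𝕜} {τ : Ω → β → ℝ} {B : ℝ}
    (hX : L2Orthonormal (fun (q : α × β) ω => X ω q.1 q.2) P)
    (hy : L2Orthonormal (fun b ω => y ω b) P) (hτ_int : ∀ b, Integrable (fun ω => τ ω b) P)
    (hτ_nonneg : ∀ b, ∀ᵐ ω ∂P, 0 ≤ τ ω b) (hτ_le : ∀ b, ∫ ω, τ ω b ∂P ≤ B)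
    (hXy : IndepFun (fun ω (q : α × β) => X ω q.1 q.2) y P)
    (hXyτ : IndepFun (fun ω => (fun q : α × β => X ω q.1 q.2, y ω)) τ P) :
    ∫⁻ ω, ∑ a, ‖((hC.sqrt * X ω * diagonal (fun b => (√(τ ω b) : 𝕜)) * hΓ.sqrt) *ᵥ y ω) a‖ₑ ^ 2
        ∂P ≤
      ENNReal.ofReal (RCLike.re C.trace) *
        (ENNReal.ofReal B * ENNReal.ofReal (RCLike.re Γ.trace)) := by
  have sqrt_meas : Measurable fun (u : β → ℝ) b => (√(u b) : 𝕜) := by fun_prop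
  have τ_meas : AEMeasurable τ P := aemeasurable_pi_lambda _ fun b => (hτ_int b).1.aemeasurable
  rw [lintegral_sum_enorm_sq_mul_diagonal_mul_mulVec (t := fun ω b => (√(τ ω b) : 𝕜)) _ _ hX hy
      (sqrt_meas.comp_aemeasurable τ_meas) hXy (hXyτ.comp measurable_id sqrt_meas),
    sum_sum_enorm_sq_posSemidef_sqrt]
  gcongr
  rw [← sum_sum_enorm_sq_posSemidef_sqrt hΓ, Finset.mul_sum]
  gcongr with b
  rw [lintegral_enorm_ofReal_sqrt_sq (hτ_int b) (hτ_nonneg b)]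
  exact ENNReal.ofReal_le_ofReal (hτ_le b)

theorem aemeasurable_mul_diagonal_mul_mulVec {κ : Type*} [Countable κ] [DecidableEq β]
    (S : Matrix κ α 𝕜) (G : Matrix β γ 𝕜) {X : Ω → Matrix α β 𝕜} {y : Ω → γ → 𝕜} {t : Ω → β → 𝕜}
    (hX : ∀ a b, AEMeasurable (fun ω => X ω a b) P) (hy : AEMeasurable y P)
    (ht : AEMeasurable t P) :
    AEMeasurable (fun ω => (S * X ω * diagonal (t ω) * G) *ᵥ y ω) P := by
  refine aemeasurable_pi_lambda _ fun i => ?_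
  simp only [mulVec, dotProduct, Matrix.mul_apply, diagonal_apply, mul_ite, mul_zero,
    Finset.sum_ite_eq', Finset.mem_univ, if_true]
  fun_prop

end SecondMoment

theorem enorm_toLp_two_sq {ι E : Type*} [Fintype ι] [SeminormedAddCommGroup E] (v : ι → E) :
    ‖WithLp.toLp 2 v‖ₑ ^ 2 = ∑ i, ‖v i‖ₑ ^ 2 := by
  simp only [enorm_sq_eq_ofReal_norm_sq, PiLp.norm_sq_eq_of_L2]
  exact ENNReal.ofReal_sum_of_nonneg fun _ _ => sq_nonneg _

theorem ae_tendsto_inv_mul_norm_toLp_zero {Ω : Type*} [MeasurableSpace Ω] {P : Measure Ω}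
    {m : ℕ → ℕ} {v : (N : ℕ) → Ω → Fin (m N) → ℂ} {A : ENNReal} (hA : A ≠ ⊤)
    (hv : ∀ N, AEMeasurable (v N) P)
    (hmoment : ∀ N, ∫⁻ ω, ∑ i, ‖v N ω i‖ₑ ^ 2 ∂P ≤ A * ENNReal.ofReal (m N)) :
    ∀ᵐ ω ∂P, Tendsto (fun N : ℕ => (N * √(m N))⁻¹ * ‖WithLp.toLp 2 (v N ω)‖) atTop (nhds 0) := by
  have moment_le (N : ℕ) : ∫⁻ ω, ‖(N * √(m N))⁻¹ * ‖WithLp.toLp 2 (v N ω)‖‖ₑ ^ 2 ∂P ≤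
      A * ENNReal.ofReal ((N : ℝ) ^ 2)⁻¹ := by
    simp only [enorm_mul, mul_pow, enorm_norm, enorm_toLp_two_sq]
    rw [lintegral_const_mul'' _ (by fun_prop), enorm_sq_eq_ofReal_norm_sq, norm_eq_abs, sq_abs,
      inv_pow, mul_pow, sq_sqrt (m N).cast_nonneg, mul_inv]
    calc ENNReal.ofReal (((N : ℝ) ^ 2)⁻¹ * (m N : ℝ)⁻¹) * ∫⁻ ω, ∑ i, ‖v N ω i‖ₑ ^ 2 ∂P
        ≤ ENNReal.ofReal (((N : ℝ) ^ 2)⁻¹ * (m N : ℝ)⁻¹) * (A * ENNReal.ofReal (m N)) := by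
          gcongr
          exact hmoment N
      _ = A * ENNReal.ofReal (((N : ℝ) ^ 2)⁻¹ * ((m N : ℝ)⁻¹ * m N)) := by
          rw [mul_left_comm, ← ENNReal.ofReal_mul (by positivity), mul_assoc]
      _ ≤ A * ENNReal.ofReal ((N : ℝ) ^ 2)⁻¹ := by
          gcongr
          exact mul_le_of_le_one_right (by positivity) inv_mul_le_one
  have sum_ne_top : ∑' N : ℕ, A * ENNReal.ofReal ((N : ℝ) ^ 2)⁻¹ ≠ ⊤ := by
    rw [ENNReal.tsum_mul_left]
    exact ENNReal.mul_ne_top hA (Real.summable_nat_pow_inv.2 one_lt_two).tsum_ofReal_ne_top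
  refine ae_tendsto_zero_of_tsum_lintegral_enorm_pow_ne_top two_ne_zero (fun N => ?_)
    (ne_top_of_le_ne_top sum_ne_top (ENNReal.tsum_le_tsum moment_le))
  have toLp_meas : AEMeasurable (fun ω => WithLp.toLp 2 (v N ω)) P :=
    (WithLp.measurable_toLp 2 _).comp_aemeasurable (hv N)
  exact (toLp_meas.norm.const_mul _).aestronglyMeasurable

section FourierVector

variable {m p : ℕ} {l : ℝ}

theorem norm_dm_apply (j : Fin m) : ‖dm m l j‖ = (√m)⁻¹ := by
  have hexp : -Complex.I * ((j : ℕ) : ℂ) * (l : ℂ) = ((-((j : ℕ) * l) : ℝ) : ℂ) * Complex.I := by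
    push_cast
    ring
  rw [dm, hexp, norm_mul, Complex.norm_exp_ofReal_mul_I, mul_one, norm_inv, Complex.norm_real,
    norm_of_nonneg (sqrt_nonneg _)]

theorem norm_toLp_dm_le_one : ‖WithLp.toLp 2 (dm m l)‖ ≤ 1 := by
  rw [← sq_le_one_iff₀ (norm_nonneg _), PiLp.norm_sq_eq_of_L2]
  simp only [norm_dm_apply, inv_pow, sq_sqrt m.cast_nonneg, Finset.sum_const, Finset.card_univ,
    Fintype.card_fin, nsmul_eq_mul]
  exact mul_inv_le_one

theorem norm_star_dm_dotProduct_le (w : Fin m → ℂ) :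
    ‖star (dm m l) ⬝ᵥ w‖ ≤ ‖WithLp.toLp 2 w‖ := by
  rw [dotProduct_comm]
  calc ‖w ⬝ᵥ star (dm m l)‖
      = ‖inner ℂ (WithLp.toLp 2 (dm m l)) (WithLp.toLp 2 w)‖ := rfl
    _ ≤ ‖WithLp.toLp 2 (dm m l)‖ * ‖WithLp.toLp 2 w‖ := norm_inner_le_norm _ _
    _ ≤ ‖WithLp.toLp 2 w‖ := mul_le_of_le_one_left (norm_nonneg _) norm_toLp_dm_le_one

theorem norm_star_dotProduct_dm_le (w : Fin m → ℂ) :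
    ‖star w ⬝ᵥ dm m l‖ ≤ (√m)⁻¹ * ∑ i, ‖w i‖ := by
  calc ‖star w ⬝ᵥ dm m l‖ ≤ ∑ i, ‖star w i * dm m l i‖ := norm_sum_le _ _
    _ = (√m)⁻¹ * ∑ i, ‖w i‖ := by
        simp only [norm_mul, norm_dm_apply, Pi.star_apply, norm_star, mul_comm, Finset.mul_sum]

theorem star_dotProduct_mul_conjTranspose_mulVec {ι κ R : Type*} [Fintype ι] [Fintype κ]
    [NonUnitalSemiring R] [Star R] (V M : Matrix ι κ R) (d : ι → R) :
    star d ⬝ᵥ ((V * Mᴴ) *ᵥ d) = ∑ s, (star d ⬝ᵥ V.col s) * (star (M.col s) ⬝ᵥ d) := by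
  rw [← mulVec_mulVec, dotProduct_mulVec]
  rfl

variable {V M : Matrix (Fin m) (Fin p) ℂ} {K : ℝ}

theorem norm_star_dm_dotProduct_mul_conjTranspose_mulVec_dm_le (hM : ∀ s, ∑ i, ‖M i s‖ ≤ K) :
    ‖star (dm m l) ⬝ᵥ ((V * Mᴴ) *ᵥ dm m l)‖ ≤ K * ∑ s, (√m)⁻¹ * ‖WithLp.toLp 2 (V.col s)‖ := by
  rw [star_dotProduct_mul_conjTranspose_mulVec, Finset.mul_sum]
  refine norm_sum_le_of_le _ fun s _ => ?_
  rw [norm_mul]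
  calc ‖star (dm m l) ⬝ᵥ V.col s‖ * ‖star (M.col s) ⬝ᵥ dm m l‖
      ≤ ‖WithLp.toLp 2 (V.col s)‖ * ((√m)⁻¹ * K) := by
        gcongr
        · exact norm_star_dm_dotProduct_le _
        · exact (norm_star_dotProduct_dm_le _).trans (by gcongr; exact hM s)
    _ = K * ((√m)⁻¹ * ‖WithLp.toLp 2 (V.col s)‖) := by ring

theorem iSup_abs_two_mul_re_dm_le (N : ℕ) (hM : ∀ s, ∑ i, ‖M i s‖ ≤ K) :
    ⨆ l ∈ Set.Ico (0 : ℝ) (2 * π),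
        |2 * (star (dm m l) ⬝ᵥ (((N : ℂ)⁻¹ • (V * Mᴴ)) *ᵥ dm m l)).re| ≤
      2 * K * ∑ s, (N * √m)⁻¹ * ‖WithLp.toLp 2 (V.col s)‖ := by
  have pointwise (l : ℝ) : |2 * (star (dm m l) ⬝ᵥ (((N : ℂ)⁻¹ • (V * Mᴴ)) *ᵥ dm m l)).re| ≤
      2 * K * ∑ s, (N * √m)⁻¹ * ‖WithLp.toLp 2 (V.col s)‖ := by
    rw [smul_mulVec, dotProduct_smul, abs_mul, abs_two]
    calc 2 * |((N : ℂ)⁻¹ • (star (dm m l) ⬝ᵥ ((V * Mᴴ) *ᵥ dm m l))).re|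
        ≤ 2 * ‖(N : ℂ)⁻¹ • (star (dm m l) ⬝ᵥ ((V * Mᴴ) *ᵥ dm m l))‖ := by
          gcongr
          exact Complex.abs_re_le_norm _
      _ = 2 * ((N : ℝ)⁻¹ * ‖star (dm m l) ⬝ᵥ ((V * Mᴴ) *ᵥ dm m l)‖) := by
          rw [norm_smul, norm_inv, Complex.norm_natCast]
      _ ≤ 2 * ((N : ℝ)⁻¹ * (K * ∑ s, (√m)⁻¹ * ‖WithLp.toLp 2 (V.col s)‖)) := by
          gcongr
          exact norm_star_dm_dotProduct_mul_conjTranspose_mulVec_dm_le hM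
      _ = 2 * K * ∑ s, (N * √m)⁻¹ * ‖WithLp.toLp 2 (V.col s)‖ := by
          simp only [mul_inv, mul_assoc, ← Finset.mul_sum]
          ring
  have bound_nonneg := (abs_nonneg _).trans (pointwise 0)
  exact Real.iSup_le (fun l => Real.iSup_le (fun _ => pointwise l) bound_nonneg) bound_nonneg

end FourierVector

theorem measurable_uncurry_matrix {m n : ℕ} :
    Measurable fun (A : Matrix (Fin m) (Fin n) ℂ) (q : Fin m × Fin n) => A q.1 q.2 :=
  measurable_pi_lambda _ fun q => (measurable_pi_apply q.2).comp (measurable_pi_apply q.1)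

theorem measurable_matrix_col {m n : ℕ} (j : Fin n) :
    Measurable fun A : Matrix (Fin m) (Fin n) ℂ => A.col j :=
  measurable_pi_lambda _ fun i => (measurable_pi_apply j).comp (measurable_pi_apply i)

theorem re_trace_le_sum_sum_norm {ι 𝕜 : Type*} [Fintype ι] [RCLike 𝕜] (A : Matrix ι ι 𝕜) :
    RCLike.re A.trace ≤ ∑ i, ∑ j, ‖A i j‖ := by
  rw [Matrix.trace, map_sum]
  exact Finset.sum_le_sum fun i _ => (RCLike.re_le_norm _).trans
    (Finset.single_le_sum (f := fun j => ‖A i j‖) (fun _ _ => norm_nonneg _) (Finset.mem_univ i))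

theorem re_trace_of_toeplitz {m : ℕ} {cf : ℤ → ℂ} {C : Matrix (Fin m) (Fin m) ℂ}
    (hC : ∀ i j, C i j = cf ((j : ℤ) - (i : ℤ))) : C.trace.re = (cf 0).re * m := by
  simp [Matrix.trace, hC, mul_comm]

theorem stmt18_general {Ω : Type*} [MeasurableSpace Ω] {P : Measure Ω} [IsProbabilityMeasure P]
    {mdim : ℕ → ℕ} {C : (N : ℕ) → Matrix (Fin (mdim N)) (Fin (mdim N)) ℂ}
    (hC_psd : ∀ N, (C N).PosSemidef) (hC_trace : ∃ A : ℝ, ∀ N, (C N).trace.re ≤ A * mdim N)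
    {p : ℕ} {M : (N : ℕ) → Matrix (Fin (mdim N)) (Fin p) ℂ}
    (hM_col : ∃ K : ℝ, ∀ N s, ∑ i, ‖M N i s‖ ≤ K)
    {Γm : (N : ℕ) → Matrix (Fin N) (Fin N) ℂ} (hΓ_psd : ∀ N, (Γm N).PosSemidef)
    (hΓ_trace : ∃ L : ℝ, ∀ N, (Γm N).trace.re ≤ L)
    {X : (N : ℕ) → Ω → Matrix (Fin (mdim N)) (Fin N) ℂ}
    (hX : ∀ N, L2Orthonormal (fun (ij : Fin (mdim N) × Fin N) ω => X N ω ij.1 ij.2) P)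
    {δm : (N : ℕ) → Ω → Matrix (Fin N) (Fin p) ℂ}
    (hδ : ∀ N s, L2Orthonormal (fun i ω => δm N ω i s) P)
    {τ : (N : ℕ) → Ω → Fin N → ℝ} (hτ_nonneg : ∀ N i, ∀ᵐ ω ∂P, 0 ≤ τ N ω i)
    (hτ_int : ∀ N i, Integrable (fun ω => τ N ω i) P)
    (hτ_mean : ∃ B : ℝ, ∀ N i, ∫ ω, τ N ω i ∂P ≤ B)
    (hIndep : ∀ N, IndepFun (fun ω => (X N ω, δm N ω)) (fun ω => τ N ω) P)
    (hIndepXδ : ∀ N, IndepFun (fun ω => X N ω) (fun ω => δm N ω) P) :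
    ∀ᵐ ω ∂P, Tendsto
      (fun N : ℕ =>
        ⨆ l ∈ Set.Ico (0 : ℝ) (2 * π),
          |2 * (star (dm (mdim N) l) ⬝ᵥ
            (((N : ℂ)⁻¹ • ((hC_psd N).sqrt * X N ω *
              Matrix.diagonal (fun i => (Real.sqrt (τ N ω i) : ℂ)) *
              (hΓ_psd N).sqrt * δm N ω * (M N)ᴴ)) *ᵥ dm (mdim N) l)).re|)
      atTop (nhds 0) := by
  obtain ⟨A, hA⟩ := hC_trace
  obtain ⟨K, hK⟩ := hM_col
  obtain ⟨L, hL⟩ := hΓ_trace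
  obtain ⟨B, hB⟩ := hτ_mean
  set V : (N : ℕ) → Ω → Matrix (Fin (mdim N)) (Fin p) ℂ := fun N ω =>
    (hC_psd N).sqrt * X N ω * diagonal (fun i => (√(τ N ω i) : ℂ)) * (hΓ_psd N).sqrt * δm N ω
  have col_meas (s : Fin p) (N : ℕ) : AEMeasurable (fun ω => (V N ω).col s) P :=
    aemeasurable_mul_diagonal_mul_mulVec _ _ (fun i j => (hX N).aemeasurable (i, j))
      (aemeasurable_pi_lambda _ (hδ N s).aemeasurable)
      (aemeasurable_pi_lambda _ fun i => by fun_prop)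
  have moment_le (s : Fin p) (N : ℕ) : ∫⁻ ω, ∑ i, ‖(V N ω).col s i‖ₑ ^ 2 ∂P ≤
      ENNReal.ofReal A * (ENNReal.ofReal B * ENNReal.ofReal L) * ENNReal.ofReal (mdim N) := by
    refine (lintegral_sum_enorm_sq_sqrt_mul_diagonal_sqrt_mul_sqrt_mulVec_le (hC_psd N) (hΓ_psd N)
      (hX N) (hδ N s) (hτ_int N) (hτ_nonneg N) (hB N)
      ((hIndepXδ N).comp measurable_uncurry_matrix (measurable_matrix_col s))
      ((hIndep N).comp (measurable_uncurry_matrix.prodMap (measurable_matrix_col s))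
        measurable_id)).trans ?_
    rw [mul_right_comm, ← ENNReal.ofReal_mul' (mdim N).cast_nonneg]
    gcongr
    exacts [hA N, hL N]
  have col_lim (s : Fin p) : ∀ᵐ ω ∂P, Tendsto (fun N : ℕ =>
      (N * √(mdim N))⁻¹ * ‖WithLp.toLp 2 ((V N ω).col s)‖) atTop (nhds 0) :=
    ae_tendsto_inv_mul_norm_toLp_zero (by finiteness) (col_meas s) (moment_le s)
  filter_upwards [ae_all_iff.2 col_lim] with ω hω
  refine squeeze_zero
    (fun N => Real.iSup_nonneg fun l => Real.iSup_nonneg fun _ => abs_nonneg _)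
    (fun N => iSup_abs_two_mul_re_dm_le N (hK N)) ?_
  simpa using (tendsto_finsetSum _ fun s _ => hω s).const_mul (2 * K)

/-- Uniform almost-sure convergence to zero of the cross term
`γ̂_m^{cross}(λ) = 2 Re[d_m(λ)^H ((1/N) C^{1/2} X T^{1/2} Γ^{1/2} δ M^H) d_m(λ)]`. -/
theorem stmt18
    {Ω : Type*} [MeasurableSpace Ω] (P : Measure Ω) [IsProbabilityMeasure P]
    (mdim : ℕ → ℕ) (c : ℝ) (hc : 0 < c)
    (hmc : Tendsto (fun N : ℕ => (mdim N : ℝ) / (N : ℝ)) atTop (nhds c))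
    (cf : ℤ → ℂ) (hcf_sum : Summable fun k => ‖cf k‖) (hcf0 : cf 0 ≠ 0)
    (hcf_herm : ∀ k, cf (-k) = star (cf k))
    (C : (N : ℕ) → Matrix (Fin (mdim N)) (Fin (mdim N)) ℂ)
    (hC_toep : ∀ N i j, C N i j = cf ((j : ℤ) - (i : ℤ)))
    (hC_psd : ∀ N, (C N).PosSemidef)
    (p : ℕ)
    (M : (N : ℕ) → Matrix (Fin (mdim N)) (Fin p) ℂ)
    (hM_col : ∃ K : ℝ, ∀ N s, ∑ i, ‖M N i s‖ ≤ K)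
    (hM_bdd : ∃ K : ℝ, ∀ N, opNorm (M N) ≤ K)
    (Γm : (N : ℕ) → Matrix (Fin N) (Fin N) ℂ)
    (hΓ_psd : ∀ N, (Γm N).PosSemidef)
    (hΓ_sum : ∃ K : ℝ, ∀ N, ∑ i : Fin N, ∑ j : Fin N, ‖Γm N i j‖ ≤ K)
    (hΓ_bdd : ∃ K : ℝ, ∀ N, opNorm (Γm N) ≤ K)
    (X : (N : ℕ) → Ω → Matrix (Fin (mdim N)) (Fin N) ℂ)
    (hX_indep : ∀ N, iIndepFun
      (fun (ij : Fin (mdim N) × Fin N) => fun ω => X N ω ij.1 ij.2) P)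
    (hX_law : ∀ N i j, Measure.map (fun ω => X N ω i j) P = stdComplexGaussian)
    (δm : (N : ℕ) → Ω → Matrix (Fin N) (Fin p) ℂ)
    (hδ_indep : ∀ N, iIndepFun
      (fun (ij : Fin N × Fin p) => fun ω => δm N ω ij.1 ij.2) P)
    (hδ_law : ∀ N i j, Measure.map (fun ω => δm N ω i j) P = stdComplexGaussian)
    (τ : (N : ℕ) → Ω → Fin N → ℝ)
    (hτ_pos : ∀ N, ∀ᵐ ω ∂P, ∀ i, 0 < τ N ω i)
    (hτ_indep : ∀ N, iIndepFun (fun i => fun ω => τ N ω i) P)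
    (hτ_ident : ∀ N i j, IdentDistrib (fun ω => τ N ω i) (fun ω => τ N ω j) P P)
    (Eτ : ℝ) (hEτ_pos : 0 < Eτ)
    (hτ_int : ∀ N i, Integrable (fun ω => τ N ω i) P)
    (hτ_mean : ∀ N i, ∫ ω, τ N ω i ∂P = Eτ)
    (hτ_lln : ∀ᵐ ω ∂P, Tendsto (fun N : ℕ => (N : ℝ)⁻¹ * ∑ i : Fin N, τ N ω i)
      atTop (nhds (1 : ℝ)))
    (hIndep : ∀ N, IndepFun (fun ω => (X N ω, δm N ω)) (fun ω => τ N ω) P)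
    (hIndepXδ : ∀ N, IndepFun (fun ω => X N ω) (fun ω => δm N ω) P)
 :
    ∀ᵐ ω ∂P, Tendsto
      (fun N : ℕ =>
        ⨆ l ∈ Set.Ico (0 : ℝ) (2 * π),
          |2 * (star (dm (mdim N) l) ⬝ᵥ
            (((N : ℂ)⁻¹ • ((hC_psd N).sqrt * X N ω *
              Matrix.diagonal (fun i => (Real.sqrt (τ N ω i) : ℂ)) *
              (hΓ_psd N).sqrt * δm N ω * (M N)ᴴ)) *ᵥ dm (mdim N) l)).re|)
      atTop (nhds 0) :=
  stmt18_general hC_psd ⟨(cf 0).re, fun N => (re_trace_of_toeplitz (hC_toep N)).le⟩ hM_col hΓ_psd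
    (hΓ_sum.imp fun _ hK N => (re_trace_le_sum_sum_norm (Γm N)).trans (hK N))
    (fun N => .of_iIndepFun_stdComplexGaussian (hX_indep N) fun ij => hX_law N ij.1 ij.2)
    (fun N s => .of_iIndepFun_stdComplexGaussian
      ((hδ_indep N).precomp (Prod.mk_left_injective s)) fun i => hδ_law N i s)
    (fun N i => (hτ_pos N).mono fun _ h => (h i).le) hτ_int
    ⟨Eτ, fun N i => (hτ_mean N i).le⟩ hIndep hIndepXδ

end
end
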